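/- There do not exist 3×3 complex positive semidefinite matrices A_a indexed by a ∈ {0,1,2}² and 3×3 complex positive semidefinite matrices B_b indexed by b ∈ {0,1,2}² such that Re Tr[A_a B_b] = (D₃)_{ab} for all a,b. Combined with the 4-dimensional realization, the positive semidefinite rank of D₃ equals 4: the minimal quantum dimension realizing the (2,3) REC communication matrix D₃ is 4, strictly smaller than the required classical dimension 9. -/

import Mathlib

/-!
The argument has two halves.

*Upper bound.* In `ℝ²` take `v = (1,0), (0,1), (1,1)` and `w = (0,1), (1,0), (1,-1)`. Then `vᵢ ⬝ wⱼ`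
vanishes for `i = j` and is `±1` otherwise, so the rank-one matrices of the tensor products
`vᵢ ⊗ vⱼ` and `wᵢ ⊗ wⱼ`, with a factor `1/4`, realize `D₃` in dimension `4`
(`hasPsdFactorization_four`).

*Lower bound.* A trace `Tr[A B] = 0` of positive semidefinite matrices forces `A B = 0`
(`mul_eq_zero_of_re_trace`). The entry of `D₃` at `(a, (0,0))` vanishes for the five indices `a`
with a zero coordinate, so the five matrices `A_a` all kill a common nonzero vector, namely a nonzero
column of `B_(0,0)`. The Hermitian `k × k` matrices killing a nonzero vector form a real space of
dimension `(k-1)²` (`hermitian_eq_zero` gives the upper bound), which is at most `4` when `k ≤ 3`.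
Hence the five `A_a` are linearly dependent over `ℝ`, and so are the five corresponding rows of `D₃`;
but `D₃` is invertible.
-/

open Matrix
open scoped ComplexOrder

/-- The communication matrix `D₃ = A₃ ⊗ A₃` of the unbiased `(2,3)` REC: entry at
`(a, b)` is `1/4` if `a₁ ≠ b₁` and `a₂ ≠ b₂`, and `0` otherwise. -/
noncomputable def D3 : Matrix (Fin 3 × Fin 3) (Fin 3 × Fin 3) ℝ :=
  fun a b => if a.1 ≠ b.1 ∧ a.2 ≠ b.2 then 1 / 4 else 0

/-- `C` admits a positive semidefinite factorization of size `k`. -/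
def HasPsdFactorization {α β : Type*} (C : Matrix α β ℝ) (k : ℕ) : Prop :=
  ∃ (A : α → Matrix (Fin k) (Fin k) ℂ) (B : β → Matrix (Fin k) (Fin k) ℂ),
    (∀ a, (A a).PosSemidef) ∧ (∀ b, (B b).PosSemidef) ∧
    (∀ a b, ((A a * B b).trace).re = C a b)

open scoped MatrixOrder in
theorem mul_eq_zero_of_re_trace {k : ℕ} {A B : Matrix (Fin k) (Fin k) ℂ}
    (hA : A.PosSemidef) (hB : B.PosSemidef) (h : ((A * B).trace).re = 0) : A * B = 0 := by
  obtain ⟨E, rfl⟩ := CStarAlgebra.nonneg_iff_eq_star_mul_self.mp hA.nonneg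
  obtain ⟨C, rfl⟩ := CStarAlgebra.nonneg_iff_eq_star_mul_self.mp hB.nonneg
  simp only [star_eq_conjTranspose] at *
  -- By cyclicity the trace is the squared Frobenius norm of `E Cᴴ`.
  have e : (Eᴴ * E * (Cᴴ * C)).trace = ((E * Cᴴ) * (E * Cᴴ)ᴴ).trace := by
    rw [Matrix.mul_assoc, trace_mul_comm]
    simp [Matrix.mul_assoc]
  have hn : 0 ≤ ((E * Cᴴ) * (E * Cᴴ)ᴴ).trace := (posSemidef_self_mul_conjTranspose _).trace_nonneg
  have h0 : ((E * Cᴴ) * (E * Cᴴ)ᴴ).trace = 0 := by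
    rw [e] at h
    exact Complex.ext h (Complex.le_def.mp hn).2.symm
  have h1 : E * Cᴴ = 0 := trace_mul_conjTranspose_self_eq_zero_iff.mp h0
  calc Eᴴ * E * (Cᴴ * C) = Eᴴ * (E * Cᴴ) * C := by simp only [Matrix.mul_assoc]
    _ = 0 := by simp [h1]

/-- A Hermitian matrix killing a vector `v` with `v i ≠ 0` is determined by its `(k-1)²` entries off
the `i`-th row and column. The real numbers `re + im` of these entries suffice, because the real part
is symmetric and the imaginary part antisymmetric. -/
theorem hermitian_eq_zero {k : ℕ} {H : Matrix (Fin k) (Fin k) ℂ} (hH : H.IsHermitian)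
    {v : Fin k → ℂ} {i : Fin k} (hi : v i ≠ 0) (hv : H *ᵥ v = 0)
    (h : ∀ j l, j ≠ i → l ≠ i → (H j l).re + (H j l).im = 0) : H = 0 := by
  have hs : ∀ j l, star (H l j) = H j l := fun j l => hH.apply j l
  have h0 : ∀ j l, j ≠ i → l ≠ i → H j l = 0 := by
    intro j l hj hl
    have h1 := h j l hj hl
    have h2 := h l j hl hj
    rw [← hs l j] at h2
    simp only [RCLike.star_def, Complex.conj_re, Complex.conj_im] at h2
    apply Complex.ext <;> simp only [Complex.zero_re, Complex.zero_im] <;> linarith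
  -- A row whose entries off column `i` vanish has vanishing `i`-th entry, since it kills `v`.
  have row : ∀ j, (∀ l, l ≠ i → H j l = 0) → H j i = 0 := by
    intro j hj
    have h1 : ∑ l, H j l * v l = 0 := congrFun hv j
    rw [Finset.sum_eq_single i (fun l _ hl => by simp [hj l hl]) (by simp)] at h1
    exact (mul_eq_zero.mp h1).resolve_right hi
  have col : ∀ j, j ≠ i → H j i = 0 := fun j hj => row j fun l hl => h0 j l hj hl
  have col' : ∀ l, l ≠ i → H i l = 0 := fun l hl => by rw [← hs i l, col l hl, star_zero]
  ext j l
  by_cases hj : j = i <;> by_cases hl : l = i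
  · subst hj; subst hl; exact row _ col'
  · subst hj; exact col' l hl
  · subst hl; exact col j hj
  · exact h0 j l hj hl

/-- The five indices sharing a coordinate with `(0,0)`. -/
def cross : Fin 5 → Fin 3 × Fin 3 := ![(0, 0), (0, 1), (0, 2), (1, 0), (2, 0)]

theorem cross_rows_independent {g : Fin 5 → ℝ} (h : ∀ b, ∑ n, g n * D3 (cross n) b = 0) :
    g = 0 := by
  have h01 := h (0, 1)
  have h02 := h (0, 2)
  have h10 := h (1, 0)
  have h20 := h (2, 0)
  have h11 := h (1, 1)
  have h12 := h (1, 2)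
  have h21 := h (2, 1)
  have h22 := h (2, 2)
  simp [Fin.sum_univ_five, D3, cross] at h01 h02 h10 h20 h11 h12 h21 h22
  funext n
  fin_cases n <;> simp <;> linarith

theorem not_hasPsdFactorization {k : ℕ} (hk : k ≤ 3) : ¬ HasPsdFactorization D3 k := by
  rintro ⟨A, B, hA, hB, hAB⟩
  have hB0 : B (0, 0) ≠ 0 := by
    intro h
    have := hAB (1, 1) (0, 0)
    simp [h, D3] at this
  obtain ⟨i, c, hic⟩ : ∃ i c, B (0, 0) i c ≠ 0 := by
    by_contra! hc
    exact hB0 (Matrix.ext hc)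
  have hkill : ∀ n, A (cross n) *ᵥ (B (0, 0)).col c = 0 := by
    intro n
    have h0 : A (cross n) * B (0, 0) = 0 := by
      refine mul_eq_zero_of_re_trace (hA _) (hB _) ?_
      rw [hAB]
      fin_cases n <;> simp [D3, cross]
    funext j
    exact congrFun (congrFun h0 j) c
  let Φ : Fin 5 → ({j : Fin k // j ≠ i} × {j : Fin k // j ≠ i} → ℝ) := fun n p =>
    (A (cross n) p.1 p.2).re + (A (cross n) p.1 p.2).im
  have hdep : ¬ LinearIndependent ℝ Φ := by
    intro hli
    have h1 := hli.fintype_card_le_finrank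
    simp only [Module.finrank_fintype_fun_eq_card, Fintype.card_prod, Fintype.card_fin,
      Fintype.card_subtype_compl, Fintype.card_subtype_eq] at h1
    have h2 : k - 1 ≤ 2 := by omega
    have := Nat.mul_le_mul h2 h2
    omega
  obtain ⟨g, hg, n₀, hn₀⟩ := Fintype.not_linearIndependent_iff.mp hdep
  have hH : ∑ n, g n • A (cross n) = 0 := by
    refine hermitian_eq_zero (v := (B (0, 0)).col c) (i := i) ?_ hic ?_ ?_
    · simp only [IsHermitian, conjTranspose_sum, conjTranspose_smul, star_trivial]
      exact Finset.sum_congr rfl fun n _ => by rw [(hA _).isHermitian.eq]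
    · simp [sum_mulVec, smul_mulVec, hkill]
    · intro j l hj hl
      have := congrFun hg (⟨j, hj⟩, ⟨l, hl⟩)
      simpa [Φ, Matrix.sum_apply, mul_add, Finset.sum_add_distrib] using this
  refine hn₀ (congrFun (cross_rows_independent fun b => ?_) n₀)
  have := congrArg (fun M => ((M * B b).trace).re) hH
  simpa [Finset.sum_mul, trace_sum, hAB] using this

/-- The tensor square `(p i) ⊗ (p j)` of a triple of plane vectors, in coordinates of `ℂ⁴`. -/
def tensorVec (p : Fin 3 → Fin 2 → ℂ) (a : Fin 3 × Fin 3) : Fin 4 → ℂ :=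
  ![p a.1 0 * p a.2 0, p a.1 0 * p a.2 1, p a.1 1 * p a.2 0, p a.1 1 * p a.2 1]

theorem hasPsdFactorization_four : HasPsdFactorization D3 4 := by
  let u := tensorVec ![![1, 0], ![0, 1], ![1, 1]]
  let w := tensorVec ![![0, 1], ![1, 0], ![1, -1]]
  refine ⟨fun a => vecMulVec (u a) (star (u a)),
    fun b => (1 / 4 : ℝ) • vecMulVec (w b) (star (w b)),
    fun a => posSemidef_vecMulVec_self_star _,
    fun b => (posSemidef_vecMulVec_self_star _).smul (by norm_num), ?_⟩
  rintro ⟨a₁, a₂⟩ ⟨b₁, b₂⟩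
  simp only [Matrix.mul_smul, trace_smul, vecMulVec_mul_vecMulVec, trace_vecMulVec]
  fin_cases a₁ <;> fin_cases a₂ <;> fin_cases b₁ <;> fin_cases b₂ <;>
    simp [tensorVec, D3, u, w, dotProduct, Fin.sum_univ_four]

/-- `D₃` has no positive semidefinite factorization of size `3`; its positive
semidefinite rank equals `4`. -/
theorem stmt15 :
    ¬ HasPsdFactorization D3 3 ∧ IsLeast {k : ℕ | HasPsdFactorization D3 k} 4 := by
  refine ⟨not_hasPsdFactorization le_rfl, hasPsdFactorization_four, fun k hk => ?_⟩
  by_contra hlt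
  exact not_hasPsdFactorization (by omega) hk
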